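/- arXiv:1705.02127 — 4 statements merged into one kernel-verified Lean document; each statement's English description precedes it below -/
import Mathlib

section
/- Let x and y be n-dimensional bit vectors and let s_i denote the binary representation of the index i with ⌈log n⌉ bits. For each 1 ≤ i ≤ n let l_i be the bit vector obtained by concatenating x[i], ¬x[i], ¬x[i], s_i, and ¬s_i, and let r_i be the bit vector obtained by concatenating ¬y[i], y[i], ¬y[i], ¬s_i, and s_i (all of dimension 2⌈log n⌉ + 3). Then there exists an index k with x[k] = y[k] = 1 if and only if there exist indices i and j such that l_i and r_j are orthogonal. -/
namespace BitOV

/-- Two bit vectors (functions into `Fin 2`) are orthogonal if in every coordinate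
at least one of them is `0`. -/
def Orth {d : ℕ} (a b : Fin d → Fin 2) : Prop := ∀ k, a k = 0 ∨ b k = 0

/-- Flip a bit: `¬1 = 0` and `¬0 = 1`. -/
def bflip (b : Fin 2) : Fin 2 := 1 - b

/-- The `k`-th bit of the binary representation of `m`. -/
def bitAt (m k : ℕ) : Fin 2 := if Nat.testBit m k then 1 else 0

/-- The binary representation of the index `i` with `⌈log n⌉` bits. -/
def srep (n : ℕ) (i : Fin n) : Fin (Nat.clog 2 n) → Fin 2 := fun k => bitAt i.val k.val

/-- The vector `l_i`: the concatenation of `x[i]`, `¬x[i]`, `¬x[i]`, `s_i` and `¬s_i`. -/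
def lvec {n : ℕ} (x : Fin n → Fin 2) (i : Fin n) :
    Fin (3 + Nat.clog 2 n + Nat.clog 2 n) → Fin 2 :=
  Fin.append (Fin.append ![x i, bflip (x i), bflip (x i)] (srep n i))
    (fun k => bflip (srep n i k))

/-- The vector `r_j`: the concatenation of `¬y[j]`, `y[j]`, `¬y[j]`, `¬s_j` and `s_j`. -/
def rvec {n : ℕ} (y : Fin n → Fin 2) (j : Fin n) :
    Fin (3 + Nat.clog 2 n + Nat.clog 2 n) → Fin 2 :=
  Fin.append (Fin.append ![bflip (y j), y j, bflip (y j)] (fun k => bflip (srep n j k)))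
    (srep n j)

theorem orth_iff {n : ℕ} (x y : Fin n → Fin 2) (i j : Fin n) :
    Orth (lvec x i) (rvec y j) ↔ (x i = 1 ∧ y j = 1) ∧ ∀ k, srep n i k = srep n j k := by
  have h3 : ∀ a b : Fin 2, ((a = 0 ∨ bflip b = 0) ∧ (bflip a = 0 ∨ b = 0) ∧
      (bflip a = 0 ∨ bflip b = 0)) ↔ (a = 1 ∧ b = 1) := by decide
  have h2 : ∀ a b : Fin 2, ((a = 0 ∨ bflip b = 0) ∧ (bflip a = 0 ∨ b = 0)) ↔ a = b := by decide
  unfold Orth lvec rvec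
  rw [Fin.forall_fin_add, Fin.forall_fin_add]
  simp only [Fin.append_left, Fin.append_right]
  rw [and_assoc, ← forall_and]
  simp only [h2]
  rw [← h3]
  simp [Fin.forall_fin_succ]

theorem srep_inj {n : ℕ} (i j : Fin n) (h : ∀ k, srep n i k = srep n j k) : i = j := by
  have hb : ∀ m : Fin n, m.val < 2 ^ Nat.clog 2 n := fun m =>
    lt_of_lt_of_le m.isLt (Nat.le_pow_clog (by norm_num) n)
  apply Fin.ext
  apply Nat.eq_of_testBit_eq
  intro k
  by_cases hk : k < Nat.clog 2 n
  · have := h ⟨k, hk⟩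
    simp only [srep, bitAt] at this
    cases h1 : Nat.testBit i.val k <;> cases h2 : Nat.testBit j.val k <;> simp_all
  · have hp : 2 ^ Nat.clog 2 n ≤ 2 ^ k := Nat.pow_le_pow_right (by norm_num) (by omega)
    rw [Nat.testBit_lt_two_pow (lt_of_lt_of_le (hb i) hp),
      Nat.testBit_lt_two_pow (lt_of_lt_of_le (hb j) hp)]

theorem disjointness_iff_orthogonal_pair (n : ℕ) (hn : 1 ≤ n) (x y : Fin n → Fin 2) :
    (∃ k, x k = 1 ∧ y k = 1) ↔ ∃ i j : Fin n, Orth (lvec x i) (rvec y j) := by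
  simp only [orth_iff]
  constructor
  · rintro ⟨k, hk⟩
    exact ⟨k, k, hk, fun _ => rfl⟩
  · rintro ⟨i, j, hk, h⟩
    obtain rfl := srep_inj i j h
    exact ⟨i, hk⟩

end BitOV
end

section
/- Let l_1,…,l_n and r_1,…,r_n be d-dimensional bit vectors and let ℓ ≥ 1, p ∈ {0,1}, q ≥ 0 be integers. The diameter D of the graph G = G_{L,R,ℓ,p,q} satisfies: if some pair l_i, r_j is orthogonal then D = 6ℓ − 3p + q, and if no pair l_i, r_j is orthogonal then D = 4ℓ − 2p + q. -/
namespace GraphOV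

/-- Two bit vectors (functions into `Fin 2`) are orthogonal if in every coordinate
at least one of them is `0`. -/
def Orth {d : ℕ} (a b : Fin d → Fin 2) : Prop := ∀ k, a k = 0 ∨ b k = 0

/-- A system of internally disjoint paths joining exterior vertices from `E`:
for each path name `i : ι` we record its two endpoints and its length. -/
structure PathSys (E : Type) (ι : Type) where
  src : ι → E
  dst : ι → E
  len : ι → ℕ

namespace PathSys

variable {E ι : Type}

/-- Endpoints of zero-length paths get identified. -/
def idRel (S : PathSys E ι) (a b : E) : Prop :=
  ∃ i, S.len i = 0 ∧ S.src i = a ∧ S.dst i = b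

/-- Vertices of the glued graph: exterior vertices (up to identification) together
with, for each path of length `m`, fresh interior vertices at positions `1,…,m-1`. -/
def Vert (S : PathSys E ι) : Type :=
  Quot S.idRel ⊕ Σ i : ι, {t : ℕ // 0 < t ∧ t < S.len i}

/-- The vertex corresponding to an exterior vertex. -/
def ext (S : PathSys E ι) (a : E) : S.Vert := Sum.inl (Quot.mk _ a)

/-- The `t`-th vertex on the path named `i` (for `0 ≤ t ≤ S.len i`). -/
def pt (S : PathSys E ι) (i : ι) (t : ℕ) : S.Vert :=
  if h : 0 < t ∧ t < S.len i then Sum.inr ⟨i, t, h⟩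
  else if t = 0 then S.ext (S.src i) else S.ext (S.dst i)

/-- The glued graph: consecutive vertices on each path are adjacent. -/
def graph (S : PathSys E ι) : SimpleGraph S.Vert :=
  SimpleGraph.fromRel fun a b =>
    ∃ i t, t + 1 ≤ S.len i ∧ a = S.pt i t ∧ b = S.pt i (t + 1)

/-- The set of vertices lying on the path named `i`. -/
def onPath (S : PathSys E ι) (i : ι) : Set S.Vert :=
  {v | ∃ t ≤ S.len i, v = S.pt i t}

/-- A walk in the glued graph contains the path named `i` entirely if all vertices of
that path occur consecutively (in forward or backward order) on the walk. -/
def WalkContainsPath (S : PathSys E ι) {x y : S.Vert} (W : S.graph.Walk x y) (i : ι) : Prop :=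
  ∃ a, a + S.len i ≤ W.length ∧
    ((∀ t ≤ S.len i, W.getVert (a + t) = S.pt i t) ∨
     (∀ t ≤ S.len i, W.getVert (a + t) = S.pt i (S.len i - t)))

end PathSys

/-- The exterior vertices of the graph `G_{L,R,ℓ,p,q}`. -/
inductive Ext (n d : ℕ) : Type
  | uL : Fin n → Ext n d
  | uR : Fin n → Ext n d
  | vL : Fin n → Ext n d
  | vR : Fin n → Ext n d
  | wL : Fin d → Ext n d
  | wR : Fin d → Ext n d
  | xL : Ext n d
  | xR : Ext n d
  | yL : Ext n d
  | yR : Ext n d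

/-- Names for the paths of the graph `G_{L,R,ℓ,p,q}`. -/
inductive Idx (n d : ℕ) (l r : Fin n → Fin d → Fin 2) : Type
  | uvL : Fin n → Idx n d l r
  | uvR : Fin n → Idx n d l r
  | vxL : Fin n → Idx n d l r
  | vxR : Fin n → Idx n d l r
  | vwL : (i : Fin n) → (k : Fin d) → l i k = 1 → Idx n d l r
  | vwR : (j : Fin n) → (k : Fin d) → r j k = 1 → Idx n d l r
  | ywL : Fin d → Idx n d l r
  | ywR : Fin d → Idx n d l r
  | ww : Fin d → Idx n d l r
  | xyL : Idx n d l r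
  | xyR : Idx n d l r
  | yy : Idx n d l r

/-- The path system defining the graph `G_{L,R,ℓ,p,q}`. -/
def sys (n d : ℕ) (l r : Fin n → Fin d → Fin 2) (ℓ p q : ℕ) :
    PathSys (Ext n d) (Idx n d l r) where
  src := fun i => match i with
    | .uvL i => .uL i
    | .uvR i => .uR i
    | .vxL i => .vL i
    | .vxR i => .vR i
    | .vwL i _ _ => .vL i
    | .vwR j _ _ => .vR j
    | .ywL _ => .yL
    | .ywR _ => .yR
    | .ww k => .wL k
    | .xyL => .xL
    | .xyR => .xR
    | .yy => .yL
  dst := fun i => match i with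
    | .uvL i => .vL i
    | .uvR i => .vR i
    | .vxL _ => .xL
    | .vxR _ => .xR
    | .vwL _ k _ => .wL k
    | .vwR _ k _ => .wR k
    | .ywL k => .wL k
    | .ywR k => .wR k
    | .ww k => .wR k
    | .xyL => .yL
    | .xyR => .yR
    | .yy => .yR
  len := fun i => match i with
    | .uvL _ => ℓ - p
    | .uvR _ => ℓ - p
    | .vxL _ => ℓ
    | .vxR _ => ℓ
    | .vwL _ _ _ => ℓ
    | .vwR _ _ _ => ℓ
    | .ywL _ => ℓ
    | .ywR _ => ℓ
    | .ww _ => q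
    | .xyL => ℓ - p
    | .xyR => ℓ - p
    | .yy => p + q

/-- The set `P_i^L`. -/
def PL (n d : ℕ) (l r : Fin n → Fin d → Fin 2) (ℓ p q : ℕ) (i : Fin n) :
    Set (sys n d l r ℓ p q).Vert :=
  (sys n d l r ℓ p q).onPath (.uvL i) ∪
    ((sys n d l r ℓ p q).onPath (.vxL i) \ {(sys n d l r ℓ p q).ext .xL}) ∪
    ⋃ (k : Fin d) (h : l i k = 1),
      ((sys n d l r ℓ p q).onPath (.vwL i k h) \ {(sys n d l r ℓ p q).ext (.wL k)})

/-- The set `P_j^R`. -/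
def PR (n d : ℕ) (l r : Fin n → Fin d → Fin 2) (ℓ p q : ℕ) (j : Fin n) :
    Set (sys n d l r ℓ p q).Vert :=
  (sys n d l r ℓ p q).onPath (.uvR j) ∪
    ((sys n d l r ℓ p q).onPath (.vxR j) \ {(sys n d l r ℓ p q).ext .xR}) ∪
    ⋃ (k : Fin d) (h : r j k = 1),
      ((sys n d l r ℓ p q).onPath (.vwR j k h) \ {(sys n d l r ℓ p q).ext (.wR k)})

/-- The set `V^L`. -/
def VL (n d : ℕ) (l r : Fin n → Fin d → Fin 2) (ℓ p q : ℕ) :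
    Set (sys n d l r ℓ p q).Vert := ⋃ i : Fin n, PL n d l r ℓ p q i

/-- The set `V^R`. -/
def VR (n d : ℕ) (l r : Fin n → Fin d → Fin 2) (ℓ p q : ℕ) :
    Set (sys n d l r ℓ p q).Vert := ⋃ j : Fin n, PR n d l r ℓ p q j

/-- The set `V^M` of all remaining vertices. -/
def VM (n d : ℕ) (l r : Fin n → Fin d → Fin 2) (ℓ p q : ℕ) :
    Set (sys n d l r ℓ p q).Vert := (VL n d l r ℓ p q ∪ VR n d l r ℓ p q)ᶜ

namespace PathSys
variable {E ι : Type}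

theorem pt_zero (S : PathSys E ι) (i : ι) : S.pt i 0 = S.ext (S.src i) := by
  simp [pt]

theorem pt_len (S : PathSys E ι) (i : ι) : S.pt i (S.len i) = S.ext (S.dst i) := by
  by_cases h : S.len i = 0
  · rw [h, pt_zero]
    exact congrArg Sum.inl (Quot.sound ⟨i, h, rfl, rfl⟩)
  · simp [pt, h]

theorem pt_int (S : PathSys E ι) (i : ι) (t : ℕ) (h : 0 < t ∧ t < S.len i) :
    S.pt i t = Sum.inr ⟨i, t, h⟩ := dif_pos h

theorem vert_cases (S : PathSys E ι) (z : S.Vert) :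
    (∃ a, z = S.ext a) ∨ ∃ i t, 0 < t ∧ t < S.len i ∧ z = S.pt i t := by
  rcases z with (a | ⟨i, t, ht⟩)
  · induction a using Quot.ind with
    | mk a => exact .inl ⟨a, rfl⟩
  · exact .inr ⟨i, t, ht.1, ht.2, (S.pt_int i t ht).symm⟩

theorem walk_pt (S : PathSys E ι) (i : ι) (t s : ℕ) (h : t + s ≤ S.len i) :
    ∃ w : S.graph.Walk (S.pt i t) (S.pt i (t + s)), w.length ≤ s := by
  induction s with
  | zero => exact ⟨SimpleGraph.Walk.nil, le_rfl⟩
  | succ s ih =>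
    obtain ⟨w, hw⟩ := ih (by omega)
    by_cases he : S.pt i (t + s) = S.pt i (t + (s + 1))
    · rw [← he]; exact ⟨w, by omega⟩
    · have ha : S.graph.Adj (S.pt i (t + s)) (S.pt i (t + (s + 1))) := by
        refine (SimpleGraph.fromRel_adj _ _ _).2 ⟨he, Or.inl ⟨i, t + s, by omega, rfl, rfl⟩⟩
      exact ⟨w.concat ha, by rw [SimpleGraph.Walk.length_concat]; omega⟩

theorem reach_src (S : PathSys E ι) (i : ι) (t : ℕ) (h : t ≤ S.len i) :
    S.graph.Reachable (S.ext (S.src i)) (S.pt i t) := by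
  obtain ⟨w, -⟩ := S.walk_pt i 0 t (by omega)
  rw [pt_zero, Nat.zero_add] at w
  exact ⟨w⟩

theorem reach_dst (S : PathSys E ι) (i : ι) :
    S.graph.Reachable (S.ext (S.src i)) (S.ext (S.dst i)) := by
  rw [← pt_len]; exact S.reach_src i _ le_rfl

theorem dist_src (S : PathSys E ι) (i : ι) (t : ℕ) (h : t ≤ S.len i) :
    S.graph.dist (S.pt i t) (S.ext (S.src i)) ≤ t := by
  obtain ⟨w, hw⟩ := S.walk_pt i 0 t (by omega)
  have := (SimpleGraph.dist_le w).trans hw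
  rw [pt_zero, Nat.zero_add] at this
  rwa [SimpleGraph.dist_comm]

theorem dist_dst (S : PathSys E ι) (i : ι) (t : ℕ) (h : t ≤ S.len i) :
    S.graph.dist (S.pt i t) (S.ext (S.dst i)) ≤ S.len i - t := by
  obtain ⟨w, hw⟩ := S.walk_pt i t (S.len i - t) (by omega)
  have := (SimpleGraph.dist_le w).trans hw
  rwa [Nat.add_sub_cancel' h, pt_len] at this

theorem dist_len (S : PathSys E ι) (i : ι) :
    S.graph.dist (S.ext (S.src i)) (S.ext (S.dst i)) ≤ S.len i := by
  have := S.dist_dst i 0 (by omega)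
  rwa [pt_zero] at this

/-- Extension of a potential on exterior vertices. -/
def pot (S : PathSys E ι) (F : E → ℕ)
    (h : ∀ i, F (S.src i) ≤ F (S.dst i) + S.len i ∧ F (S.dst i) ≤ F (S.src i) + S.len i) :
    S.Vert → ℕ
  | .inl a => Quot.lift F (by
      rintro a b ⟨i, h0, rfl, rfl⟩
      have := h i
      omega) a
  | .inr ⟨i, t, _⟩ => min (F (S.src i) + t) (F (S.dst i) + (S.len i - t))

theorem pot_pt (S : PathSys E ι) (F : E → ℕ)
    (h : ∀ i, F (S.src i) ≤ F (S.dst i) + S.len i ∧ F (S.dst i) ≤ F (S.src i) + S.len i)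
    (i : ι) (t : ℕ) (ht : t ≤ S.len i) :
    S.pot F h (S.pt i t) = min (F (S.src i) + t) (F (S.dst i) + (S.len i - t)) := by
  have hi := h i
  by_cases h1 : 0 < t ∧ t < S.len i
  · rw [S.pt_int i t h1]; rfl
  · by_cases h2 : t = 0
    · subst h2
      rw [pt_zero]
      change F (S.src i) = _
      omega
    · have : t = S.len i := by omega
      subst this
      rw [pt_len]
      change F (S.dst i) = _
      omega

theorem pot_walk (S : PathSys E ι) (F : E → ℕ)
    (h : ∀ i, F (S.src i) ≤ F (S.dst i) + S.len i ∧ F (S.dst i) ≤ F (S.src i) + S.len i)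
    {a b : S.Vert} (w : S.graph.Walk a b) : S.pot F h b ≤ S.pot F h a + w.length := by
  induction w with
  | nil => simp
  | @cons u v x hadj w ih =>
    have : S.pot F h v ≤ S.pot F h u + 1 := by
      rcases ((SimpleGraph.fromRel_adj _ _ _).1 hadj).2 with
        ⟨i, t, ht, rfl, rfl⟩ | ⟨i, t, ht, rfl, rfl⟩
      · rw [pot_pt _ _ _ _ _ ht, pot_pt _ _ _ _ _ (by omega)]; omega
      · rw [pot_pt _ _ _ _ _ ht, pot_pt _ _ _ _ _ (by omega)]; omega
    rw [SimpleGraph.Walk.length_cons]; omega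

theorem pot_dist (S : PathSys E ι) (hc : S.graph.Connected) (F : E → ℕ)
    (h : ∀ i, F (S.src i) ≤ F (S.dst i) + S.len i ∧ F (S.dst i) ≤ F (S.src i) + S.len i)
    (a b : E) : F b ≤ F a + S.graph.dist (S.ext a) (S.ext b) := by
  obtain ⟨w, hw⟩ := hc.exists_walk_length_eq_dist (S.ext a) (S.ext b)
  rw [← hw]
  exact S.pot_walk F h w

end PathSys

theorem sys_conn (n d ℓ p q : ℕ) (l r : Fin n → Fin d → Fin 2) :
    (sys n d l r ℓ p q).graph.Connected := by
  set S := sys n d l r ℓ p q with hS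
  have hxL : S.graph.Reachable (S.ext .xL) (S.ext .yL) := S.reach_dst .xyL
  have hxR : S.graph.Reachable (S.ext .xR) (S.ext .yR) := S.reach_dst .xyR
  have hyy : S.graph.Reachable (S.ext .yL) (S.ext .yR) := S.reach_dst .yy
  have hvL (i) : S.graph.Reachable (S.ext (.vL i)) (S.ext .xL) := S.reach_dst (.vxL i)
  have hvR (i) : S.graph.Reachable (S.ext (.vR i)) (S.ext .xR) := S.reach_dst (.vxR i)
  have huL (i) : S.graph.Reachable (S.ext (.uL i)) (S.ext (.vL i)) := S.reach_dst (.uvL i)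
  have huR (i) : S.graph.Reachable (S.ext (.uR i)) (S.ext (.vR i)) := S.reach_dst (.uvR i)
  have hwL (k) : S.graph.Reachable (S.ext .yL) (S.ext (.wL k)) := S.reach_dst (.ywL k)
  have hwR (k) : S.graph.Reachable (S.ext .yR) (S.ext (.wR k)) := S.reach_dst (.ywR k)
  have hext : ∀ a, S.graph.Reachable (S.ext a) (S.ext .yL) := by
    intro a
    cases a with
    | uL i => exact (huL i).trans ((hvL i).trans hxL)
    | uR i => exact (huR i).trans ((hvR i).trans (hxR.trans hyy.symm))
    | vL i => exact (hvL i).trans hxL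
    | vR i => exact (hvR i).trans (hxR.trans hyy.symm)
    | wL k => exact (hwL k).symm
    | wR k => exact (hwR k).symm.trans hyy.symm
    | xL => exact hxL
    | xR => exact hxR.trans hyy.symm
    | yL => exact SimpleGraph.Reachable.refl _
    | yR => exact hyy.symm
  have hall : ∀ z, S.graph.Reachable z (S.ext .yL) := by
    intro z
    rcases S.vert_cases z with ⟨a, rfl⟩ | ⟨i, t, ht1, ht2, rfl⟩
    · exact hext a
    · exact (S.reach_src i t ht2.le).symm.trans (hext _)
  exact { preconnected := fun a b => (hall a).trans (hall b).symm, nonempty := ⟨S.ext .yL⟩ }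

theorem sys_class (n d ℓ p q : ℕ) (hℓ : 1 ≤ ℓ) (hp : p ≤ 1) (l r : Fin n → Fin d → Fin 2)
    (S : PathSys (Ext n d) (Idx n d l r)) (hS : S = sys n d l r ℓ p q) (z : S.Vert) :
    (∃ i, S.graph.dist z (S.ext (.vL i)) ≤ ℓ - p) ∨ S.graph.dist z (S.ext .yL) ≤ ℓ - p ∨
    (∃ i, S.graph.dist z (S.ext (.vR i)) ≤ ℓ - p) ∨ S.graph.dist z (S.ext .yR) ≤ ℓ - p ∨
    (∃ t ≤ p + q, S.graph.dist z (S.ext .yL) ≤ t ∧ S.graph.dist z (S.ext .yR) ≤ p + q - t) ∨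
    (∃ k, ∃ t ≤ q, S.graph.dist z (S.ext (.wL k)) ≤ t ∧
      S.graph.dist z (S.ext (.wR k)) ≤ q - t) := by
  rcases S.vert_cases z with ⟨a, rfl⟩ | ⟨i, t, ht1, ht2, rfl⟩
  · subst hS
    set S := sys n d l r ℓ p q with hS
    cases a with
    | uL i => exact .inl ⟨i, S.dist_len (.uvL i)⟩
    | uR i => exact .inr (.inr (.inl ⟨i, S.dist_len (.uvR i)⟩))
    | vL i => exact .inl ⟨i, by simp⟩
    | vR i => exact .inr (.inr (.inl ⟨i, by simp⟩))
    | wL k =>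
      exact .inr (.inr (.inr (.inr (.inr ⟨k, 0, by omega, by simp, S.dist_len (.ww k)⟩))))
    | wR k =>
      refine .inr (.inr (.inr (.inr (.inr ⟨k, q, le_rfl, ?_, by simp⟩))))
      rw [SimpleGraph.dist_comm]; exact S.dist_len (.ww k)
    | xL => exact .inr (.inl (S.dist_len .xyL))
    | xR => exact .inr (.inr (.inr (.inl (S.dist_len .xyR))))
    | yL => exact .inr (.inl (by simp))
    | yR => exact .inr (.inr (.inr (.inl (by simp))))
  · have h3 := S.dist_src i t ht2.le
    have h4 := S.dist_dst i t ht2.le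
    subst hS
    cases i with
    | uvL i => exact .inl ⟨i, h4.trans (Nat.sub_le _ _)⟩
    | uvR i => exact .inr (.inr (.inl ⟨i, h4.trans (Nat.sub_le _ _)⟩))
    | vxL i => change t < ℓ at ht2; exact .inl ⟨i, h3.trans (by omega)⟩
    | vxR i => change t < ℓ at ht2; exact .inr (.inr (.inl ⟨i, h3.trans (by omega)⟩))
    | vwL i k _ => change t < ℓ at ht2; exact .inl ⟨i, h3.trans (by omega)⟩
    | vwR i k _ => change t < ℓ at ht2; exact .inr (.inr (.inl ⟨i, h3.trans (by omega)⟩))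
    | ywL k => change t < ℓ at ht2; exact .inr (.inl (h3.trans (by omega)))
    | ywR k => change t < ℓ at ht2; exact .inr (.inr (.inr (.inl (h3.trans (by omega)))))
    | ww k => exact .inr (.inr (.inr (.inr (.inr ⟨k, t, ht2.le, h3, h4⟩))))
    | xyL => exact .inr (.inl (h4.trans (Nat.sub_le _ _)))
    | xyR => exact .inr (.inr (.inr (.inl (h4.trans (Nat.sub_le _ _)))))
    | yy => exact .inr (.inr (.inr (.inr (.inl ⟨t, ht2.le, h3, h4⟩))))

set_option maxHeartbeats 4000000 in
theorem sys_upper (n d ℓ p q M : ℕ) (hℓ : 1 ≤ ℓ) (hp : p ≤ 1) (l r : Fin n → Fin d → Fin 2)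
    (S : PathSys (Ext n d) (Idx n d l r)) (hS : S = sys n d l r ℓ p q)
    (hM : 4 * ℓ - 2 * p + q ≤ M)
    (hA : ∀ i j, S.graph.dist (S.ext (.vL i)) (S.ext (.vR j)) + 2 * (ℓ - p) ≤ M)
    (z z' : S.Vert) : S.graph.dist z z' ≤ M := by
  have hc : S.graph.Connected := by subst hS; exact sys_conn n d ℓ p q l r
  have hT : ∀ a b c, S.graph.dist a c ≤ S.graph.dist a b + S.graph.dist b c :=
    fun a b c => hc.dist_triangle
  have hC : ∀ a b, S.graph.dist a b = S.graph.dist b a := fun a b => SimpleGraph.dist_comm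
  have hZ := sys_class n d ℓ p q hℓ hp l r S hS
  have hxL : S.graph.dist (S.ext .xL) (S.ext .yL) ≤ ℓ - p := by subst hS; exact PathSys.dist_len (sys n d l r ℓ p q) .xyL
  have hxR : S.graph.dist (S.ext .xR) (S.ext .yR) ≤ ℓ - p := by subst hS; exact PathSys.dist_len (sys n d l r ℓ p q) .xyR
  have hyy : S.graph.dist (S.ext .yL) (S.ext .yR) ≤ p + q := by subst hS; exact PathSys.dist_len (sys n d l r ℓ p q) .yy
  have hvL (i) : S.graph.dist (S.ext (.vL i)) (S.ext .xL) ≤ ℓ := by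
    subst hS; exact PathSys.dist_len (sys n d l r ℓ p q) (.vxL i)
  have hvR (i) : S.graph.dist (S.ext (.vR i)) (S.ext .xR) ≤ ℓ := by
    subst hS; exact PathSys.dist_len (sys n d l r ℓ p q) (.vxR i)
  have hwL (k) : S.graph.dist (S.ext .yL) (S.ext (.wL k)) ≤ ℓ := by
    subst hS; exact PathSys.dist_len (sys n d l r ℓ p q) (.ywL k)
  have hwR (k) : S.graph.dist (S.ext .yR) (S.ext (.wR k)) ≤ ℓ := by
    subst hS; exact PathSys.dist_len (sys n d l r ℓ p q) (.ywR k)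
  clear hS
  generalize S.graph.dist = D at *
  generalize S.ext .xL = xL at *
  generalize S.ext .xR = xR at *
  generalize S.ext .yL = yL at *
  generalize S.ext .yR = yR at *
  -- derived facts
  have tL : ∀ z, D z yL ≤ D z xL + (ℓ - p) := fun z => by have := hT z xL yL; omega
  have tR : ∀ z, D z yR ≤ D z xR + (ℓ - p) := fun z => by have := hT z xR yR; omega
  have tLR : ∀ z, D z yR ≤ D z yL + (p + q) := fun z => by have := hT z yL yR; omega
  have tRL : ∀ z, D z yL ≤ D z yR + (p + q) := fun z => by
    have := hT z yR yL; have := hC yL yR; omega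
  have tvL : ∀ z i, D z xL ≤ D z (S.ext (.vL i)) + ℓ := fun z i => by
    have := hT z (S.ext (.vL i)) xL; have := hvL i; omega
  have tvR : ∀ z i, D z xR ≤ D z (S.ext (.vR i)) + ℓ := fun z i => by
    have := hT z (S.ext (.vR i)) xR; have := hvR i; omega
  have txL : ∀ z, D z xL ≤ D z yL + (ℓ - p) := fun z => by
    have := hT z yL xL; have := hC yL xL; omega
  have txR : ∀ z, D z xR ≤ D z yR + (ℓ - p) := fun z => by
    have := hT z yR xR; have := hC yR xR; omega
  have twL : ∀ z k, D z yL ≤ D z (S.ext (.wL k)) + ℓ := fun z k => by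
    have := hT z (S.ext (.wL k)) yL; have := hwL k; have := hC yL (S.ext (.wL k)); omega
  have twR : ∀ z k, D z yR ≤ D z (S.ext (.wR k)) + ℓ := fun z k => by
    have := hT z (S.ext (.wR k)) yR; have := hwR k; have := hC yR (S.ext (.wR k)); omega
  have m : ∀ a, D z z' ≤ D z a + D z' a := fun a => by
    have := hT z a z'; have := hC a z'; omega
  have m1 := m xL
  have m2 := m xR
  have m3 := m yL
  have m4 := m yR
  have a1 := tL z
  have a2 := tR z
  have a3 := tLR z
  have a4 := tRL z
  have a5 := txL z
  have a6 := txR z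
  have b1 := tL z'
  have b2 := tR z'
  have b3 := tLR z'
  have b4 := tRL z'
  have b5 := txL z'
  have b6 := txR z'
  have hAB : ∀ a b i j, D a (S.ext (.vL i)) ≤ ℓ - p → D b (S.ext (.vR j)) ≤ ℓ - p →
      D a b ≤ M := fun a b i j h1 h2 => by
    have := hT a (S.ext (.vL i)) b
    have := hT (S.ext (.vL i)) (S.ext (.vR j)) b
    have := hC b (S.ext (.vR j))
    have := hA i j
    omega
  rcases hZ z with ⟨i, hz⟩ | hz | ⟨i, hz⟩ | hz | ⟨t, ht, hz1, hz2⟩ | ⟨k, t, ht, hz1, hz2⟩ <;>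
  rcases hZ z' with ⟨i', hz'⟩ | hz' | ⟨i', hz'⟩ | hz' | ⟨t', ht', hz1', hz2'⟩ |
    ⟨k', t', ht', hz1', hz2'⟩ <;>
  first
  | exact hAB z z' _ _ hz hz'
  | (rw [hC]; exact hAB z' z _ _ hz' hz)
  | (try have c1 := tvL z i
     try have c2 := tvR z i
     try have c3 := tvL z' i'
     try have c4 := tvR z' i'
     try have c5 := twL z k
     try have c6 := twR z k
     try have c7 := twL z' k'
     try have c8 := twR z' k'
     omega)

theorem diam_eq (n d ℓ p q M : ℕ) (hℓ : 1 ≤ ℓ) (hp : p ≤ 1) (l r : Fin n → Fin d → Fin 2)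
    (hM : 4 * ℓ - 2 * p + q ≤ M)
    (hA : ∀ i j, (sys n d l r ℓ p q).graph.dist ((sys n d l r ℓ p q).ext (.vL i))
      ((sys n d l r ℓ p q).ext (.vR j)) + 2 * (ℓ - p) ≤ M)
    (F : Ext n d → ℕ) (a b : Ext n d)
    (hF : ∀ i, F ((sys n d l r ℓ p q).src i) ≤
        F ((sys n d l r ℓ p q).dst i) + (sys n d l r ℓ p q).len i ∧
      F ((sys n d l r ℓ p q).dst i) ≤
        F ((sys n d l r ℓ p q).src i) + (sys n d l r ℓ p q).len i)
    (ha : F a = 0) (hb : F b = M) :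
    (sys n d l r ℓ p q).graph.diam = M := by
  have hc := sys_conn n d ℓ p q l r
  have hu := sys_upper n d ℓ p q M hℓ hp l r _ rfl hM hA
  have he : (sys n d l r ℓ p q).graph.ediam ≤ M := by
    refine SimpleGraph.ediam_le_of_edist_le fun u v => ?_
    rw [← (hc u v).coe_dist_eq_edist]
    exact_mod_cast hu u v
  have ht : (sys n d l r ℓ p q).graph.ediam ≠ ⊤ :=
    ne_top_of_le_ne_top (ENat.natCast_ne_top M) he
  apply le_antisymm
  · exact ENat.toNat_le_of_le_natCast he
  · have h1 := (sys n d l r ℓ p q).pot_dist hc F hF a b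
    have h2 := SimpleGraph.dist_le_diam ht (u := (sys n d l r ℓ p q).ext a)
      (v := (sys n d l r ℓ p q).ext b)
    omega

/-- Potential used when no pair is orthogonal. -/
def potA (n d ℓ p q : ℕ) : Ext n d → ℕ
  | .uL _ => 0
  | .vL _ => ℓ - p
  | .xL => 2 * ℓ - p
  | .yL => 2 * ℓ - p
  | .wL _ => 2 * ℓ - p
  | .wR _ => 2 * ℓ - p + q
  | .xR => 2 * ℓ - p + q
  | .yR => 2 * ℓ - p + q
  | .vR _ => 3 * ℓ - p + q
  | .uR _ => 4 * ℓ - 2 * p + q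

open Classical in
/-- Potential used when the pair `i`, `j` is orthogonal. -/
noncomputable def potB (n d ℓ p q : ℕ) (l : Fin n → Fin d → Fin 2) (i j : Fin n) : Ext n d → ℕ
  | .uL a => if a = i then 0 else 3 * ℓ - p
  | .vL a => if a = i then ℓ - p else 3 * ℓ - p
  | .xL => 2 * ℓ - p
  | .yL => 3 * ℓ - 2 * p
  | .wL k => if l i k = 1 then 2 * ℓ - p else 4 * ℓ - 2 * p
  | .wR k => if l i k = 1 then 2 * ℓ - p + q else 4 * ℓ - 2 * p + q
  | .xR => 4 * ℓ - 2 * p + q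
  | .yR => 3 * ℓ - p + q
  | .vR b => if b = j then 5 * ℓ - 2 * p + q else 3 * ℓ - p + q
  | .uR b => if b = j then 6 * ℓ - 3 * p + q else 3 * ℓ - p + q

theorem diameter_of_G (n d ℓ p q : ℕ) (hn : 1 ≤ n) (hd : 1 ≤ d) (hℓ : 1 ≤ ℓ)
    (hp : p ≤ 1) (l r : Fin n → Fin d → Fin 2) :
    ((∃ i j, Orth (l i) (r j)) →
      (sys n d l r ℓ p q).graph.diam = 6 * ℓ - 3 * p + q) ∧
    ((∀ i j, ¬ Orth (l i) (r j)) →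
      (sys n d l r ℓ p q).graph.diam = 4 * ℓ - 2 * p + q) := by
  set S := sys n d l r ℓ p q with hS
  have hc : S.graph.Connected := sys_conn n d ℓ p q l r
  have hxL : S.graph.dist (S.ext .xL) (S.ext .yL) ≤ ℓ - p := S.dist_len .xyL
  have hxR : S.graph.dist (S.ext .xR) (S.ext .yR) ≤ ℓ - p := S.dist_len .xyR
  have hyy : S.graph.dist (S.ext .yL) (S.ext .yR) ≤ p + q := S.dist_len .yy
  have hvL (i) : S.graph.dist (S.ext (.vL i)) (S.ext .xL) ≤ ℓ := S.dist_len (.vxL i)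
  have hvR (i) : S.graph.dist (S.ext (.vR i)) (S.ext .xR) ≤ ℓ := S.dist_len (.vxR i)
  have hww (k) : S.graph.dist (S.ext (.wL k)) (S.ext (.wR k)) ≤ q := S.dist_len (.ww k)
  constructor
  · rintro ⟨i, j, hij⟩
    refine diam_eq n d ℓ p q _ hℓ hp l r (by omega) ?_ (potB n d ℓ p q l i j) (.uL i) (.uR j)
      ?_ (by simp [potB]) (by simp [potB])
    · intro a b
      change S.graph.dist (S.ext (.vL a)) (S.ext (.vR b)) + _ ≤ _
      have h1 := hc.dist_triangle (u := S.ext (.vL a)) (v := S.ext .xL) (w := S.ext (.vR b))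
      have h2 := hc.dist_triangle (u := S.ext .xL) (v := S.ext .yL) (w := S.ext (.vR b))
      have h3 := hc.dist_triangle (u := S.ext .yL) (v := S.ext .yR) (w := S.ext (.vR b))
      have h4 := hc.dist_triangle (u := S.ext .yR) (v := S.ext .xR) (w := S.ext (.vR b))
      have h5 := hvL a
      have h6 := hvR b
      rw [SimpleGraph.dist_comm] at h6 hxR
      omega
    · intro c
      cases c with
      | vwL a k hk =>
        simp only [sys, potB]
        by_cases ha : a = i
        · subst ha; simp only [hk, if_true]; omega
        · simp only [ha, if_false]; split_ifs <;> omega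
      | vwR b k hk =>
        simp only [sys, potB]
        by_cases hb : b = j
        · subst hb
          have : l i k = 0 := by
            rcases hij k with h | h
            · exact h
            · rw [h] at hk; exact absurd hk (by decide)
          simp only [this, if_true]
          rw [if_neg (by decide)]
          omega
        · simp only [hb, if_false]; split_ifs <;> omega
      | _ => simp only [sys, potB]; (try split_ifs) <;> omega
  · intro hno
    refine diam_eq n d ℓ p q _ hℓ hp l r le_rfl ?_ (potA n d ℓ p q) (.uL ⟨0, hn⟩) (.uR ⟨0, hn⟩)
      ?_ rfl rfl
    · intro a b
      change S.graph.dist (S.ext (.vL a)) (S.ext (.vR b)) + _ ≤ _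
      have := hno a b
      unfold Orth at this
      push Not at this
      obtain ⟨k, h1, h2⟩ := this
      have k1 : l a k = 1 := by omega
      have k2 : r b k = 1 := by omega
      have h3 : S.graph.dist (S.ext (.vL a)) (S.ext (.wL k)) ≤ ℓ := S.dist_len (.vwL a k k1)
      have h4 : S.graph.dist (S.ext (.vR b)) (S.ext (.wR k)) ≤ ℓ := S.dist_len (.vwR b k k2)
      have h5 := hc.dist_triangle (u := S.ext (.vL a)) (v := S.ext (.wL k)) (w := S.ext (.vR b))
      have h6 := hc.dist_triangle (u := S.ext (.wL k)) (v := S.ext (.wR k)) (w := S.ext (.vR b))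
      have h7 := hww k
      rw [SimpleGraph.dist_comm] at h4
      omega
    · intro c
      cases c <;> simp only [sys, potA] <;> omega

end GraphOV
end

section
/- Let l_1,…,l_n and r_1,…,r_n be d-dimensional bit vectors and let ℓ ≥ 1, p ∈ {0,1}, q ≥ 0 be integers, and let G = G_{L,R,ℓ,p,q}. For every pair of vertices s, t ∈ V^M, dist_G(s, t) ≤ 4ℓ − 2p + q; more specifically, dist_G(x^L, v) ≤ 2ℓ − p + q and dist_G(v, x^R) ≤ 2ℓ − p + q for every vertex v ∈ V^M. -/
namespace GraphOV

def D {V : Type} (G : SimpleGraph V) (a b : V) (k : ℕ) : Prop :=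
  ∃ w : G.Walk a b, w.length ≤ k

section
variable {V : Type} {G : SimpleGraph V}

theorem D.rfl' {a : V} {k : ℕ} : D G a a k := ⟨.nil, by simp⟩

theorem D.symm {a b : V} {k : ℕ} (h : D G a b k) : D G b a k := by
  obtain ⟨w, hw⟩ := h
  exact ⟨w.reverse, by simpa using hw⟩

theorem D.tr {a b c : V} {j k : ℕ} (m : ℕ) (h : D G a b j) (h' : D G b c k)
    (hm : j + k ≤ m) : D G a c m := by
  obtain ⟨w, hw⟩ := h
  obtain ⟨w', hw'⟩ := h'
  exact ⟨w.append w', by simp; omega⟩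

theorem D.mono {a b : V} {j k : ℕ} (h : D G a b j) (hk : j ≤ k) : D G a b k := by
  obtain ⟨w, hw⟩ := h
  exact ⟨w, by omega⟩

theorem D.dist {a b : V} {k : ℕ} (h : D G a b k) : G.dist a b ≤ k := by
  obtain ⟨w, hw⟩ := h
  exact (SimpleGraph.dist_le w).trans hw
end

section
variable {E ι : Type} (S : PathSys E ι)

theorem pt_int (i : ι) (t : ℕ) (ht : 0 < t ∧ t < S.len i) :
    S.pt i t = (Sum.inr ⟨i, t, ht⟩ : S.Vert) := by
  unfold PathSys.pt
  exact dif_pos ht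

theorem pt_zero (i : ι) : S.pt i 0 = S.ext (S.src i) := by
  simp [PathSys.pt]

theorem pt_len (i : ι) : S.pt i (S.len i) = S.ext (S.dst i) := by
  by_cases h : S.len i = 0
  · rw [h, pt_zero]
    exact congrArg Sum.inl (Quot.sound ⟨i, h, rfl, rfl⟩)
  · simp [PathSys.pt, h]

theorem D_step (i : ι) (t : ℕ) (h : t + 1 ≤ S.len i) :
    D S.graph (S.pt i t) (S.pt i (t + 1)) 1 := by
  by_cases e : S.pt i t = S.pt i (t + 1)
  · rw [← e]; exact D.rfl'
  · have : S.graph.Adj (S.pt i t) (S.pt i (t + 1)) := by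
      rw [PathSys.graph, SimpleGraph.fromRel_adj]
      exact ⟨e, Or.inl ⟨i, t, h, rfl, rfl⟩⟩
    exact ⟨this.toWalk, by simp⟩

theorem D_add (i : ι) (t a : ℕ) (h : t + a ≤ S.len i) :
    D S.graph (S.pt i t) (S.pt i (t + a)) a := by
  induction a with
  | zero => exact D.rfl'
  | succ a ih => exact (ih (by omega)).tr _ (D_step S i (t + a) (by omega)) le_rfl

theorem D_src (i : ι) (t : ℕ) (h : t ≤ S.len i) :
    D S.graph (S.ext (S.src i)) (S.pt i t) t := by
  have := D_add S i 0 t (by omega)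
  rwa [pt_zero, Nat.zero_add] at this

theorem D_dst (i : ι) (t : ℕ) (h : t ≤ S.len i) :
    D S.graph (S.pt i t) (S.ext (S.dst i)) (S.len i - t) := by
  have := D_add S i t (S.len i - t) (by omega)
  rwa [Nat.add_sub_cancel' h, pt_len] at this

theorem D_full (i : ι) :
    D S.graph (S.ext (S.src i)) (S.ext (S.dst i)) (S.len i) := by
  have := D_src S i (S.len i) le_rfl
  rwa [pt_len] at this
end

theorem key (n d ℓ p q : ℕ) (hℓ : 1 ≤ ℓ)
    (hp : p ≤ 1) (l r : Fin n → Fin d → Fin 2)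
    (v : (sys n d l r ℓ p q).Vert) (hv : v ∈ VM n d l r ℓ p q) :
    ∃ a ≤ q, D (sys n d l r ℓ p q).graph ((sys n d l r ℓ p q).ext .xL) v (2 * ℓ - p + a) ∧
      D (sys n d l r ℓ p q).graph v ((sys n d l r ℓ p q).ext .xR) (2 * ℓ - p + (q - a)) := by
  let S := sys n d l r ℓ p q
  have xyL : D S.graph (S.ext .xL) (S.ext .yL) (ℓ - p) := D_full S .xyL
  have xyR : D S.graph (S.ext .xR) (S.ext .yR) (ℓ - p) := D_full S .xyR
  have yy : D S.graph (S.ext .yL) (S.ext .yR) (p + q) := D_full S .yy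
  have ywL (k) : D S.graph (S.ext .yL) (S.ext (.wL k)) ℓ := D_full S (.ywL k)
  have ywR (k) : D S.graph (S.ext .yR) (S.ext (.wR k)) ℓ := D_full S (.ywR k)
  have ww (k) : D S.graph (S.ext (.wL k)) (S.ext (.wR k)) q := D_full S (.ww k)
  have xwL (k) : D S.graph (S.ext .xL) (S.ext (.wL k)) (2 * ℓ - p) :=
    xyL.tr _ (ywL k) (by omega)
  have xwR (k) : D S.graph (S.ext .xR) (S.ext (.wR k)) (2 * ℓ - p) :=
    xyR.tr _ (ywR k) (by omega)
  have xyRL : D S.graph (S.ext .xR) (S.ext .yL) (ℓ + q) := xyR.tr _ yy.symm (by omega)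
  have xyLR : D S.graph (S.ext .xL) (S.ext .yR) (ℓ + q) := xyL.tr _ yy (by omega)
  have hL (i) : v ∉ PL n d l r ℓ p q i := fun h =>
    hv (Or.inl (Set.mem_iUnion.2 ⟨i, h⟩))
  have hR (i) : v ∉ PR n d l r ℓ p q i := fun h =>
    hv (Or.inr (Set.mem_iUnion.2 ⟨i, h⟩))
  rcases v with e | ⟨i, t, ht⟩
  · induction e using Quot.ind with | _ e =>
    change ∃ a ≤ q, D S.graph (S.ext .xL) (S.ext e) _ ∧ D S.graph (S.ext e) (S.ext .xR) _
    cases e with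
    | uL i => exact absurd (Or.inl (Or.inl ⟨0, Nat.zero_le _, (pt_zero S (.uvL i)).symm⟩)) (hL i)
    | uR i => exact absurd (Or.inl (Or.inl ⟨0, Nat.zero_le _, (pt_zero S (.uvR i)).symm⟩)) (hR i)
    | vL i => exact absurd (Or.inl (Or.inl ⟨_, le_rfl, (pt_len S (.uvL i)).symm⟩)) (hL i)
    | vR i => exact absurd (Or.inl (Or.inl ⟨_, le_rfl, (pt_len S (.uvR i)).symm⟩)) (hR i)
    | wL k => exact ⟨0, by omega, xwL k, (ww k).tr _ (xwR k).symm (by omega)⟩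
    | wR k => exact ⟨q, by omega, (xwL k).tr _ (ww k) (by omega), (xwR k).symm.mono (by omega)⟩
    | xL => exact ⟨0, by omega, D.rfl', xyL.tr _ xyRL.symm (by omega)⟩
    | xR => exact ⟨q, by omega, xyLR.tr _ xyR.symm (by omega), D.rfl'⟩
    | yL => exact ⟨0, by omega, xyL.mono (by omega), xyRL.symm.mono (by omega)⟩
    | yR => exact ⟨q, by omega, xyLR.mono (by omega), xyR.symm.mono (by omega)⟩
  · have hpt : (Sum.inr ⟨i, t, ht⟩ : S.Vert) = S.pt i t :=
      (pt_int S i t ht).symm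
    have h1 := D_src S i t ht.2.le
    have h2 := D_dst S i t ht.2.le
    rw [← hpt] at h1 h2
    have ne (e) : (Sum.inr ⟨i, t, ht⟩ : S.Vert) ≠ S.ext e := by
      intro h; cases h
    cases i with
    | uvL i => exact absurd (Or.inl (Or.inl ⟨t, ht.2.le, hpt⟩)) (hL i)
    | uvR i => exact absurd (Or.inl (Or.inl ⟨t, ht.2.le, hpt⟩)) (hR i)
    | vxL i => exact absurd (Or.inl (Or.inr ⟨⟨t, ht.2.le, hpt⟩, ne _⟩)) (hL i)
    | vxR i => exact absurd (Or.inl (Or.inr ⟨⟨t, ht.2.le, hpt⟩, ne _⟩)) (hR i)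
    | vwL i k h =>
      exact (hL i (Or.inr (Set.mem_iUnion₂.2 ⟨k, h, ⟨t, ht.2.le, hpt⟩, ne _⟩))).elim
    | vwR i k h =>
      exact (hR i (Or.inr (Set.mem_iUnion₂.2 ⟨k, h, ⟨t, ht.2.le, hpt⟩, ne _⟩))).elim
    | ywL k =>
      have h' : t < ℓ := ht.2
      change D S.graph (S.ext .yL) _ _ at h1
      exact ⟨0, by omega, xyL.tr _ h1 (by omega), h1.symm.tr _ xyRL.symm (by omega)⟩
    | ywR k =>
      have h' : t < ℓ := ht.2
      change D S.graph (S.ext .yR) _ _ at h1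
      exact ⟨q, by omega, xyLR.tr _ h1 (by omega), h1.symm.tr _ xyR.symm (by omega)⟩
    | ww k =>
      have h' : t < q := ht.2
      change D S.graph (S.ext (.wL k)) _ _ at h1
      change D S.graph _ (S.ext (.wR k)) (q - t) at h2
      exact ⟨t, by omega, (xwL k).tr _ h1 (by omega), h2.tr _ (xwR k).symm (by omega)⟩
    | xyL =>
      have h' : t < ℓ - p := ht.2
      change D S.graph (S.ext .xL) _ _ at h1
      change D S.graph _ (S.ext .yL) (ℓ - p - t) at h2
      exact ⟨0, by omega, h1.mono (by omega), h2.tr _ xyRL.symm (by omega)⟩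
    | xyR =>
      have h' : t < ℓ - p := ht.2
      change D S.graph (S.ext .xR) _ _ at h1
      change D S.graph _ (S.ext .yR) (ℓ - p - t) at h2
      exact ⟨q, by omega, xyLR.tr _ h2.symm (by omega), h1.symm.mono (by omega)⟩
    | yy =>
      have h' : t < p + q := ht.2
      change D S.graph (S.ext .yL) _ _ at h1
      change D S.graph _ (S.ext .yR) (p + q - t) at h2
      exact ⟨min t q, by omega, xyL.tr _ h1 (by omega), h2.tr _ xyR.symm (by omega)⟩

theorem dist_middle_vertices (n d ℓ p q : ℕ) (hn : 1 ≤ n) (hd : 1 ≤ d) (hℓ : 1 ≤ ℓ)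
    (hp : p ≤ 1) (l r : Fin n → Fin d → Fin 2) :
    (∀ s ∈ VM n d l r ℓ p q, ∀ t ∈ VM n d l r ℓ p q,
      (sys n d l r ℓ p q).graph.dist s t ≤ 4 * ℓ - 2 * p + q) ∧
    (∀ v ∈ VM n d l r ℓ p q,
      (sys n d l r ℓ p q).graph.dist ((sys n d l r ℓ p q).ext .xL) v ≤ 2 * ℓ - p + q ∧
      (sys n d l r ℓ p q).graph.dist v ((sys n d l r ℓ p q).ext .xR) ≤ 2 * ℓ - p + q) := by
  constructor
  · intro s hs t ht
    obtain ⟨a, ha, h1, h2⟩ := key n d ℓ p q hℓ hp l r s hs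
    obtain ⟨b, hb, h3, h4⟩ := key n d ℓ p q hℓ hp l r t ht
    by_cases h : a + b ≤ q
    · exact (h1.symm.tr _ h3 (by omega)).dist
    · exact (h2.tr _ h4.symm (by omega)).dist
  · intro v hv
    obtain ⟨a, ha, h1, h2⟩ := key n d ℓ p q hℓ hp l r v hv
    exact ⟨(h1.mono (by omega)).dist, (h2.mono (by omega)).dist⟩

end GraphOV
end

section
/- Let l_1,…,l_n and r_1,…,r_n be d-dimensional bit vectors and let ℓ ≥ 1, p ∈ {0,1}, q ≥ 0 be integers, and let G = G_{L,R,ℓ,p,q}. For every pair of vertices s and t of G, if s ∈ V^L ∪ V^M and t ∈ V^L ∪ V^M, or s ∈ V^R ∪ V^M and t ∈ V^R ∪ V^M, then dist_G(s, t) ≤ 4ℓ − 2p + q. -/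
namespace GraphOV

namespace PathSys
variable {E ι : Type}

/-- There is a walk of length at most `k`. -/
def Near (S : PathSys E ι) (a b : S.Vert) (k : ℕ) : Prop :=
  ∃ w : S.graph.Walk a b, w.length ≤ k

theorem Near.refl (S : PathSys E ι) (a : S.Vert) (k : ℕ) : S.Near a a k := ⟨.nil, by simp⟩

theorem Near.symm {S : PathSys E ι} {a b : S.Vert} {k : ℕ} (h : S.Near a b k) : S.Near b a k := by
  obtain ⟨w, hw⟩ := h
  exact ⟨w.reverse, by simpa using hw⟩

theorem Near.trans {S : PathSys E ι} {a b c : S.Vert} {k m : ℕ} (h : S.Near a b k)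
    (h' : S.Near b c m) : S.Near a c (k + m) := by
  obtain ⟨w, hw⟩ := h
  obtain ⟨w', hw'⟩ := h'
  exact ⟨w.append w', by rw [SimpleGraph.Walk.length_append]; omega⟩

theorem Near.mono {S : PathSys E ι} {a b : S.Vert} {k m : ℕ} (h : S.Near a b k)
    (h' : k ≤ m) : S.Near a b m := by
  obtain ⟨w, hw⟩ := h
  exact ⟨w, by omega⟩

theorem Near.dist_le {S : PathSys E ι} {a b : S.Vert} {k : ℕ} (h : S.Near a b k) :
    S.graph.dist a b ≤ k := by
  obtain ⟨w, hw⟩ := h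
  exact (SimpleGraph.dist_le w).trans hw

theorem near_step (S : PathSys E ι) (i : ι) (t : ℕ) (h : t + 1 ≤ S.len i) :
    S.Near (S.pt i t) (S.pt i (t + 1)) 1 := by
  by_cases he : S.pt i t = S.pt i (t + 1)
  · rw [← he]; exact Near.refl _ _ _
  · have : S.graph.Adj (S.pt i t) (S.pt i (t + 1)) := by
      rw [graph, SimpleGraph.fromRel_adj]
      exact ⟨he, Or.inl ⟨i, t, h, rfl, rfl⟩⟩
    exact ⟨this.toWalk, by simp⟩

theorem near_pt (S : PathSys E ι) (i : ι) (t m : ℕ) (h : t + m ≤ S.len i) :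
    S.Near (S.pt i t) (S.pt i (t + m)) m := by
  induction m with
  | zero => exact Near.refl _ _ _
  | succ m ih => exact (ih (by omega)).trans (S.near_step i (t + m) (by omega))

theorem near_src (S : PathSys E ι) (i : ι) (t : ℕ) (h : t ≤ S.len i) :
    S.Near (S.pt i t) (S.ext (S.src i)) t := by
  have := (S.near_pt i 0 t (by omega)).symm
  rwa [pt_zero, Nat.zero_add] at this

theorem near_dst (S : PathSys E ι) (i : ι) (t : ℕ) (h : t ≤ S.len i) :
    S.Near (S.pt i t) (S.ext (S.dst i)) (S.len i - t) := by
  have := S.near_pt i t (S.len i - t) (by omega)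
  rwa [Nat.add_sub_cancel' h, pt_len] at this

theorem near_all (S : PathSys E ι) (i : ι) :
    S.Near (S.ext (S.src i)) (S.ext (S.dst i)) (S.len i) := by
  have := S.near_dst i 0 (by omega)
  rwa [pt_zero] at this

theorem inr_eq (S : PathSys E ι) (i : ι) (t : ℕ) (h : 0 < t ∧ t < S.len i) :
    (Sum.inr ⟨i, t, h⟩ : S.Vert) = S.pt i t := by simp [pt, h]

end PathSys

open PathSys

/-- Closeness to both `y` vertices. -/
def MGood (n d : ℕ) (l r : Fin n → Fin d → Fin 2) (ℓ p q : ℕ)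
    (t : (sys n d l r ℓ p q).Vert) : Prop :=
  ∃ a b, (sys n d l r ℓ p q).Near t ((sys n d l r ℓ p q).ext .yL) a ∧
    (sys n d l r ℓ p q).Near t ((sys n d l r ℓ p q).ext .yR) b ∧
    a ≤ ℓ + q ∧ b ≤ ℓ + q ∧ a + b ≤ 2 * ℓ + q

section
variable {n d ℓ p q : ℕ} {l r : Fin n → Fin d → Fin 2}

theorem near_VL (hℓ : 1 ≤ ℓ) (hp : p ≤ 1) {s : (sys n d l r ℓ p q).Vert}
    (hs : s ∈ VL n d l r ℓ p q) :
    (sys n d l r ℓ p q).Near s ((sys n d l r ℓ p q).ext .xL) (2 * ℓ - p) := by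
  simp only [VL, PL, Set.mem_iUnion, Set.mem_union, Set.mem_diff, Set.mem_singleton_iff] at hs
  obtain ⟨i, (⟨t, ht, rfl⟩ | ⟨⟨t, ht, rfl⟩, -⟩) | ⟨k, h, ⟨t, ht, rfl⟩, hne⟩⟩ := hs
  · exact ((near_dst _ _ t ht).trans (near_all (sys n d l r ℓ p q) (.vxL i))).mono
      (by simp only [sys] at ht ⊢; omega)
  · exact (near_dst _ _ t ht).mono (by simp only [sys] at ht ⊢; omega)
  · have : t ≠ ℓ := by
      rintro rfl
      exact hne (pt_len (sys n d l r t p q) (.vwL i k h))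
    exact ((near_src _ _ t ht).trans (near_all (sys n d l r ℓ p q) (.vxL i))).mono
      (by simp only [sys] at ht ⊢; omega)

theorem near_VR (hℓ : 1 ≤ ℓ) (hp : p ≤ 1) {s : (sys n d l r ℓ p q).Vert}
    (hs : s ∈ VR n d l r ℓ p q) :
    (sys n d l r ℓ p q).Near s ((sys n d l r ℓ p q).ext .xR) (2 * ℓ - p) := by
  simp only [VR, PR, Set.mem_iUnion, Set.mem_union, Set.mem_diff, Set.mem_singleton_iff] at hs
  obtain ⟨i, (⟨t, ht, rfl⟩ | ⟨⟨t, ht, rfl⟩, -⟩) | ⟨k, h, ⟨t, ht, rfl⟩, hne⟩⟩ := hs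
  · exact ((near_dst _ _ t ht).trans (near_all (sys n d l r ℓ p q) (.vxR i))).mono
      (by simp only [sys] at ht ⊢; omega)
  · exact (near_dst _ _ t ht).mono (by simp only [sys] at ht ⊢; omega)
  · have : t ≠ ℓ := by
      rintro rfl
      exact hne (pt_len (sys n d l r t p q) (.vwR i k h))
    exact ((near_src _ _ t ht).trans (near_all (sys n d l r ℓ p q) (.vxR i))).mono
      (by simp only [sys] at ht ⊢; omega)

theorem good_wL (k : Fin d) : MGood n d l r ℓ p q ((sys n d l r ℓ p q).ext (.wL k)) :=
  ⟨ℓ, q + ℓ, (near_all (sys n d l r ℓ p q) (.ywL k)).symm,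
    (near_all (sys n d l r ℓ p q) (.ww k)).trans (near_all (sys n d l r ℓ p q) (.ywR k)).symm,
    by omega, by omega, by omega⟩

theorem good_wR (k : Fin d) : MGood n d l r ℓ p q ((sys n d l r ℓ p q).ext (.wR k)) :=
  ⟨q + ℓ, ℓ, (near_all (sys n d l r ℓ p q) (.ww k)).symm.trans
      (near_all (sys n d l r ℓ p q) (.ywL k)).symm,
    (near_all (sys n d l r ℓ p q) (.ywR k)).symm, by omega, by omega, by omega⟩

theorem good_left (hℓ : 1 ≤ ℓ) (hp : p ≤ 1) {s : (sys n d l r ℓ p q).Vert} {a : ℕ}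
    (h : (sys n d l r ℓ p q).Near s ((sys n d l r ℓ p q).ext .yL) a) (ha : a ≤ ℓ - p) :
    MGood n d l r ℓ p q s :=
  ⟨a, a + (p + q), h, h.trans (near_all (sys n d l r ℓ p q) .yy), by omega, by omega, by omega⟩

theorem good_right (hℓ : 1 ≤ ℓ) (hp : p ≤ 1) {s : (sys n d l r ℓ p q).Vert} {a : ℕ}
    (h : (sys n d l r ℓ p q).Near s ((sys n d l r ℓ p q).ext .yR) a) (ha : a ≤ ℓ - p) :
    MGood n d l r ℓ p q s :=
  ⟨a + (p + q), a, h.trans (near_all (sys n d l r ℓ p q) .yy).symm, h,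
    by omega, by omega, by omega⟩

theorem uvL_mem (i : Fin n) (t : ℕ) (ht : t ≤ ℓ - p) :
    (sys n d l r ℓ p q).pt (.uvL i) t ∈ VL n d l r ℓ p q :=
  Set.mem_iUnion.2 ⟨i, Or.inl (Or.inl ⟨t, ht, rfl⟩)⟩

theorem uvR_mem (i : Fin n) (t : ℕ) (ht : t ≤ ℓ - p) :
    (sys n d l r ℓ p q).pt (.uvR i) t ∈ VR n d l r ℓ p q :=
  Set.mem_iUnion.2 ⟨i, Or.inl (Or.inl ⟨t, ht, rfl⟩)⟩

theorem cover (hℓ : 1 ≤ ℓ) (hp : p ≤ 1) (s : (sys n d l r ℓ p q).Vert) :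
    s ∈ VL n d l r ℓ p q ∪ VR n d l r ℓ p q ∨ MGood n d l r ℓ p q s := by
  rcases s with s | ⟨i, t, ht⟩
  · induction s using Quot.ind with
    | mk e =>
    change (sys n d l r ℓ p q).ext e ∈ _ ∨ MGood n d l r ℓ p q ((sys n d l r ℓ p q).ext e)
    cases e with
    | uL i =>
      have := uvL_mem (d := d) (q := q) (l := l) (r := r) (ℓ := ℓ) (p := p) i 0 (by omega)
      rw [pt_zero] at this
      exact Or.inl (Or.inl this)
    | uR i =>
      have := uvR_mem (d := d) (q := q) (l := l) (r := r) (ℓ := ℓ) (p := p) i 0 (by omega)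
      rw [pt_zero] at this
      exact Or.inl (Or.inr this)
    | vL i =>
      have := uvL_mem (d := d) (q := q) (l := l) (r := r) (ℓ := ℓ) (p := p) i (ℓ - p) le_rfl
      exact Or.inl (Or.inl ((pt_len (sys n d l r ℓ p q) (.uvL i)) ▸ this))
    | vR i =>
      have := uvR_mem (d := d) (q := q) (l := l) (r := r) (ℓ := ℓ) (p := p) i (ℓ - p) le_rfl
      exact Or.inl (Or.inr ((pt_len (sys n d l r ℓ p q) (.uvR i)) ▸ this))
    | wL k => exact Or.inr (good_wL k)
    | wR k => exact Or.inr (good_wR k)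
    | xL => exact Or.inr (good_left hℓ hp (near_all (sys n d l r ℓ p q) .xyL) le_rfl)
    | xR => exact Or.inr (good_right hℓ hp (near_all (sys n d l r ℓ p q) .xyR) le_rfl)
    | yL => exact Or.inr (good_left hℓ hp (Near.refl _ _ 0) (by omega))
    | yR => exact Or.inr (good_right hℓ hp (Near.refl _ _ 0) (by omega))
  · have hne : ∀ e, (Sum.inr ⟨i, t, ht⟩ : (sys n d l r ℓ p q).Vert) ≠
        (sys n d l r ℓ p q).ext e := fun e h => by cases h
    rw [inr_eq] at hne ⊢
    obtain ⟨h0, h1⟩ := ht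
    have hs := near_src _ i t h1.le
    have hd := near_dst _ i t h1.le
    cases i with
    | uvL i => exact Or.inl (Or.inl (uvL_mem i t h1.le))
    | uvR i => exact Or.inl (Or.inr (uvR_mem i t h1.le))
    | vxL i =>
      exact Or.inl (Or.inl (Set.mem_iUnion.2 ⟨i, Or.inl (Or.inr ⟨⟨t, h1.le, rfl⟩, hne _⟩)⟩))
    | vxR i =>
      exact Or.inl (Or.inr (Set.mem_iUnion.2 ⟨i, Or.inl (Or.inr ⟨⟨t, h1.le, rfl⟩, hne _⟩)⟩))
    | vwL i k h =>
      exact Or.inl (Or.inl (Set.mem_iUnion.2 ⟨i, Or.inr (Set.mem_iUnion₂.2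
        ⟨k, h, ⟨t, h1.le, rfl⟩, hne _⟩)⟩))
    | vwR i k h =>
      exact Or.inl (Or.inr (Set.mem_iUnion.2 ⟨i, Or.inr (Set.mem_iUnion₂.2
        ⟨k, h, ⟨t, h1.le, rfl⟩, hne _⟩)⟩))
    | ywL k => exact Or.inr (good_left hℓ hp hs (by simp only [sys] at h1; omega))
    | ywR k => exact Or.inr (good_right hℓ hp hs (by simp only [sys] at h1; omega))
    | ww k =>
      simp only [sys] at h1
      exact Or.inr ⟨t + ℓ, (q - t) + ℓ, hs.trans (near_all (sys n d l r ℓ p q) (.ywL k)).symm,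
        hd.trans (near_all (sys n d l r ℓ p q) (.ywR k)).symm, by omega, by omega, by omega⟩
    | xyL => exact Or.inr (good_left hℓ hp hd (by simp only [sys]; omega))
    | xyR => exact Or.inr (good_right hℓ hp hd (by simp only [sys]; omega))
    | yy =>
      simp only [sys] at h1
      exact Or.inr ⟨t, p + q - t, hs, hd, by omega, by omega, by omega⟩

theorem good_VM (hℓ : 1 ≤ ℓ) (hp : p ≤ 1) {s : (sys n d l r ℓ p q).Vert}
    (hs : s ∈ VM n d l r ℓ p q) : MGood n d l r ℓ p q s :=
  (cover hℓ hp s).resolve_left hs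

theorem MGood.xL (hp : p ≤ ℓ) {s : (sys n d l r ℓ p q).Vert} (h : MGood n d l r ℓ p q s) :
    (sys n d l r ℓ p q).Near s ((sys n d l r ℓ p q).ext .xL) (2 * ℓ - p + q) := by
  obtain ⟨a, b, ha, hb, h1, h2, h3⟩ := h
  exact (ha.trans (near_all (sys n d l r ℓ p q) .xyL).symm).mono (by simp only [sys]; omega)

theorem MGood.xR (hp : p ≤ ℓ) {s : (sys n d l r ℓ p q).Vert} (h : MGood n d l r ℓ p q s) :
    (sys n d l r ℓ p q).Near s ((sys n d l r ℓ p q).ext .xR) (2 * ℓ - p + q) := by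
  obtain ⟨a, b, ha, hb, h1, h2, h3⟩ := h
  exact (hb.trans (near_all (sys n d l r ℓ p q) .xyR).symm).mono (by simp only [sys]; omega)

theorem MGood.near (hp : p ≤ ℓ) {s t : (sys n d l r ℓ p q).Vert} (h : MGood n d l r ℓ p q s)
    (h' : MGood n d l r ℓ p q t) :
    (sys n d l r ℓ p q).Near s t (4 * ℓ - 2 * p + q) := by
  obtain ⟨a, b, ha, hb, h1, h2, h3⟩ := h
  obtain ⟨a', b', ha', hb', h1', h2', h3'⟩ := h'
  by_cases hc : a + a' ≤ 2 * ℓ + q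
  · exact (ha.trans ha'.symm).mono (by omega)
  · exact (hb.trans hb'.symm).mono (by omega)

end

theorem dist_same_side (n d ℓ p q : ℕ) (hn : 1 ≤ n) (hd : 1 ≤ d) (hℓ : 1 ≤ ℓ)
    (hp : p ≤ 1) (l r : Fin n → Fin d → Fin 2) :
    ∀ s t : (sys n d l r ℓ p q).Vert,
      ((s ∈ VL n d l r ℓ p q ∪ VM n d l r ℓ p q ∧
        t ∈ VL n d l r ℓ p q ∪ VM n d l r ℓ p q) ∨
       (s ∈ VR n d l r ℓ p q ∪ VM n d l r ℓ p q ∧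
        t ∈ VR n d l r ℓ p q ∪ VM n d l r ℓ p q)) →
      (sys n d l r ℓ p q).graph.dist s t ≤ 4 * ℓ - 2 * p + q := by
  have hpl : p ≤ ℓ := hp.trans hℓ
  rintro s t (⟨hs | hs, ht | ht⟩ | ⟨hs | hs, ht | ht⟩)
  · exact (((near_VL hℓ hp hs).trans (near_VL hℓ hp ht).symm).mono (by omega)).dist_le
  · exact (((near_VL hℓ hp hs).trans ((good_VM hℓ hp ht).xL hpl).symm).mono (by omega)).dist_le
  · exact ((((good_VM hℓ hp hs).xL hpl).trans (near_VL hℓ hp ht).symm).mono (by omega)).dist_le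
  · exact ((good_VM hℓ hp hs).near hpl (good_VM hℓ hp ht)).dist_le
  · exact (((near_VR hℓ hp hs).trans (near_VR hℓ hp ht).symm).mono (by omega)).dist_le
  · exact (((near_VR hℓ hp hs).trans ((good_VM hℓ hp ht).xR hpl).symm).mono (by omega)).dist_le
  · exact ((((good_VM hℓ hp hs).xR hpl).trans (near_VR hℓ hp ht).symm).mono (by omega)).dist_le
  · exact ((good_VM hℓ hp hs).near hpl (good_VM hℓ hp ht)).dist_le

end GraphOV
end
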